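/- arXiv:2006.00801 — 2 statements merged into one kernel-verified Lean document; each statement's English description precedes it below -/
import Mathlib

section
/- Let a ∈ ℝ \ {0}, φ₀ ∈ ℝ, let r : ℝ → ℝ be continuously differentiable with r(z) > 0 for all z, and let R : ℝ → ℝ be differentiable with R′(z) = 1/r(z) for all z. Define φ(z) := (a/2)·ln(r(z)) + R(z) + φ₀, f(z) := √(r(z))·sin(φ(z)), g(z) := √(r(z))·cos(φ(z)), and T_d := [[aI, −I],[I, aI]]. Then the gradient-generating equation holds: for all z ∈ ℝ, f′(z)f(z)·aI + f′(z)g(z)·(−I) + g′(z)f(z)·I + g′(z)g(z)·aI = −I. -/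
/-!
In polar form `(f, g) = √r (sin φ, cos φ)`, so `f² + g² = r` and the Wronskian-type expression
`f' g - g' f` equals `r φ'`. Since `φ' = a r' / (2 r) + 1 / r`, one gets
`f' f + g' g = r' / 2` (`gen_radial`) and `f' g - g' f = a r' / 2 + 1` (`gen_angular`). Every block
of `T_d` is a multiple of the identity, so the matrix equation is the scalar identity
`a (f' f + g' g) - (f' g - g' f) = -1`.
-/

open Matrix

/-- The phase `φ(z) = (a/2)·ln(r(z)) + R(z) + φ₀`. -/
noncomputable def phase (a φ₀ : ℝ) (r R : ℝ → ℝ) : ℝ → ℝ :=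
  fun z => a / 2 * Real.log (r z) + R z + φ₀

/-- `f(z) = √(r(z))·sin(φ(z))`. -/
noncomputable def fGen (a φ₀ : ℝ) (r R : ℝ → ℝ) : ℝ → ℝ :=
  fun z => Real.sqrt (r z) * Real.sin (phase a φ₀ r R z)

/-- `g(z) = √(r(z))·cos(φ(z))`. -/
noncomputable def gGen (a φ₀ : ℝ) (r R : ℝ → ℝ) : ℝ → ℝ :=
  fun z => Real.sqrt (r z) * Real.cos (phase a φ₀ r R z)

section
variable {a φ₀ z r' : ℝ} {r R : ℝ → ℝ}

theorem hasDerivAt_phase (hr : HasDerivAt r r' z) (hpos : 0 < r z)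
    (hR : HasDerivAt R (1 / r z) z) :
    HasDerivAt (phase a φ₀ r R) (a / 2 * (r' / r z) + 1 / r z) z :=
  (((hr.log hpos.ne').const_mul (a / 2)).add hR).add_const φ₀

theorem hasDerivAt_fGen (hr : HasDerivAt r r' z) (hpos : 0 < r z)
    (hR : HasDerivAt R (1 / r z) z) :
    HasDerivAt (fGen a φ₀ r R)
      (r' / (2 * √(r z)) * Real.sin (phase a φ₀ r R z)
        + √(r z) * (Real.cos (phase a φ₀ r R z) * (a / 2 * (r' / r z) + 1 / r z))) z :=
  (hr.sqrt hpos.ne').mul (hasDerivAt_phase hr hpos hR).sin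

theorem hasDerivAt_gGen (hr : HasDerivAt r r' z) (hpos : 0 < r z)
    (hR : HasDerivAt R (1 / r z) z) :
    HasDerivAt (gGen a φ₀ r R)
      (r' / (2 * √(r z)) * Real.cos (phase a φ₀ r R z)
        + √(r z) * (-Real.sin (phase a φ₀ r R z) * (a / 2 * (r' / r z) + 1 / r z))) z :=
  (hr.sqrt hpos.ne').mul (hasDerivAt_phase hr hpos hR).cos

/-- Half the derivative of `f² + g² = r`. -/
theorem gen_radial (hr : HasDerivAt r r' z) (hpos : 0 < r z)
    (hR : HasDerivAt R (1 / r z) z) :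
    deriv (fGen a φ₀ r R) z * fGen a φ₀ r R z + deriv (gGen a φ₀ r R) z * gGen a φ₀ r R z
      = r' / 2 := by
  rw [(hasDerivAt_fGen hr hpos hR).deriv, (hasDerivAt_gGen hr hpos hR).deriv, fGen, gGen]
  have hs : √(r z) ≠ 0 := (Real.sqrt_pos.2 hpos).ne'
  have hq : r' / (2 * √(r z)) * √(r z) = r' / 2 := by field_simp
  linear_combination (Real.sin (phase a φ₀ r R z) ^ 2 + Real.cos (phase a φ₀ r R z) ^ 2) * hq
    + r' / 2 * Real.sin_sq_add_cos_sq (phase a φ₀ r R z)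

/-- The Wronskian `f' g - g' f` equals `r φ'`. -/
theorem gen_angular (hr : HasDerivAt r r' z) (hpos : 0 < r z)
    (hR : HasDerivAt R (1 / r z) z) :
    deriv (fGen a φ₀ r R) z * gGen a φ₀ r R z - deriv (gGen a φ₀ r R) z * fGen a φ₀ r R z
      = a / 2 * r' + 1 := by
  rw [(hasDerivAt_fGen hr hpos hR).deriv, (hasDerivAt_gGen hr hpos hR).deriv, fGen, gGen]
  have hsq : √(r z) ^ 2 = r z := Real.sq_sqrt hpos.le
  have hφ : r z * (a / 2 * (r' / r z) + 1 / r z) = a / 2 * r' + 1 := by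
    have := hpos.ne'
    field_simp
  linear_combination
    √(r z) ^ 2 * (a / 2 * (r' / r z) + 1 / r z) * Real.sin_sq_add_cos_sq (phase a φ₀ r R z)
    + (a / 2 * (r' / r z) + 1 / r z) * hsq + hφ

end

/-- generating functions for `T_d = [[aI, −I],[I, aI]]`: with `r > 0`
continuously differentiable, `R` an antiderivative of `1/r`, and
`φ = (a/2)ln r + R + φ₀`, the functions `f = √r sin φ`, `g = √r cos φ` satisfy the
gradient-generating equation `f'f·(aI) + f'g·(−I) + g'f·I + g'g·(aI) = −I`. -/
theorem stmt11 {n : ℕ} (a φ₀ : ℝ) (ha : a ≠ 0)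
    (r : ℝ → ℝ) (hr : ContDiff ℝ 1 r) (hrpos : ∀ z : ℝ, 0 < r z)
    (R : ℝ → ℝ) (hR : ∀ z : ℝ, HasDerivAt R (1 / r z) z) :
    ∀ z : ℝ,
      (deriv (fGen a φ₀ r R) z * fGen a φ₀ r R z) • (a • (1 : Matrix (Fin n) (Fin n) ℝ))
        + (deriv (fGen a φ₀ r R) z * gGen a φ₀ r R z) • (-(1 : Matrix (Fin n) (Fin n) ℝ))
        + (deriv (gGen a φ₀ r R) z * fGen a φ₀ r R z) • (1 : Matrix (Fin n) (Fin n) ℝ)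
        + (deriv (gGen a φ₀ r R) z * gGen a φ₀ r R z) • (a • (1 : Matrix (Fin n) (Fin n) ℝ))
        = -(1 : Matrix (Fin n) (Fin n) ℝ) := by
  intro z
  have hrz : HasDerivAt r (deriv r z) z := (hr.differentiable one_ne_zero z).hasDerivAt
  have h₁ := gen_radial (a := a) (φ₀ := φ₀) hrz (hrpos z) (hR z)
  have h₂ := gen_angular (a := a) (φ₀ := φ₀) hrz (hrpos z) (hR z)
  -- Both sides are multiples of `1`; it remains to compare the coefficients.
  rw [← neg_one_smul ℝ (1 : Matrix (Fin n) (Fin n) ℝ)]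
  match_scalars
  linear_combination a * h₁ - h₂
end

section
/- Let n ∈ ℕ and m = 4n, and define the coordinate-wise exploration sequence w_ℓ := (u_ℓᵀ, v_ℓᵀ)ᵀ ∈ ℝ^{2n} for ℓ = 0,…,4n−1 by u_ℓ = ū_{ℓ mod 4}·e_{⌊ℓ/4⌋+1} and v_ℓ = v̄_{ℓ mod 4}·e_{⌊ℓ/4⌋+1}, where (ū₀,ū₁,ū₂,ū₃) = (1,0,−1,0), (v̄₀,v̄₁,v̄₂,v̄₃) = (0,1,0,−1), and e_i is the i-th standard basis vector of ℝⁿ. Then: (i) for (α₁, α₂) = (1, 0), T(W) = [[−I, −I],[I, −I]] (n×n blocks); and (ii) for (α₁, α₂) = (1/2, 1/2), T(W) = [[0, −I],[I, 0]] (n×n blocks), where I is the n×n identity matrix. -/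
/-!
Over one period `4k, …, 4k+3` the exploration vectors are `x, y, -x, -y`, where `x` and `y` are the
`k`-th basis vectors of the first and the second copy of `ℝⁿ`. They sum to zero, so the inner sums
`∑_{j<i} wⱼ` restart from zero at each multiple of four and run through `0, x, x + y, y` within the
period. With `c = (α₁ + α₂)²`, the period therefore contributes
`2 α₂ (x xᵀ + y yᵀ) + c (y xᵀ - x xᵀ - x yᵀ - y yᵀ)` to `T(W)`; summing over `k < n` turns
`x xᵀ`, `x yᵀ`, … into identity blocks. This gives `T(W)` for all `α₁, α₂` (`Tmat_eq`), and the two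
claims are special cases.
-/

open Matrix

/-- The 4-periodic scalar sequence `ū = (1, 0, −1, 0, 1, 0, −1, 0, …)`. -/
def ubar (ℓ : ℕ) : ℝ :=
  if ℓ % 4 = 0 then 1 else if ℓ % 4 = 2 then -1 else 0

/-- The 4-periodic scalar sequence `v̄ = (0, 1, 0, −1, 0, 1, 0, −1, …)`. -/
def vbar (ℓ : ℕ) : ℝ :=
  if ℓ % 4 = 1 then 1 else if ℓ % 4 = 3 then -1 else 0

/-- `u_ℓ = ū_{ℓ mod 4} · e_{⌊ℓ/4⌋+1}` (0-indexed: the `⌊ℓ/4⌋`-th standard basis vector). -/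
def uSeq (n : ℕ) (ℓ : ℕ) : Fin n → ℝ :=
  fun a => if (a : ℕ) = ℓ / 4 then ubar ℓ else 0

/-- `v_ℓ = v̄_{ℓ mod 4} · e_{⌊ℓ/4⌋+1}` (0-indexed: the `⌊ℓ/4⌋`-th standard basis vector). -/
def vSeq (n : ℕ) (ℓ : ℕ) : Fin n → ℝ :=
  fun a => if (a : ℕ) = ℓ / 4 then vbar ℓ else 0

/-- The stacked exploration sequence `w_ℓ = (u_ℓᵀ, v_ℓᵀ)ᵀ ∈ ℝ^{2n}`. -/
def wSeq (n : ℕ) (ℓ : ℕ) : Fin n ⊕ Fin n → ℝ :=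
  Sum.elim (uSeq n ℓ) (vSeq n ℓ)

/-- `T(W) = ∑_{i<4n} ( α₂ wᵢ wᵢᵀ + (α₁+α₂)² ∑_{j<i} wᵢ wⱼᵀ )` for the coordinate-wise
exploration sequence of length `m = 4n`. -/
noncomputable def Tmat (n : ℕ) (α₁ α₂ : ℝ) :
    Matrix (Fin n ⊕ Fin n) (Fin n ⊕ Fin n) ℝ :=
  ∑ i ∈ Finset.range (4 * n),
    (α₂ • Matrix.vecMulVec (wSeq n i) (wSeq n i)
      + (α₁ + α₂) ^ 2 • ∑ j ∈ Finset.range i, Matrix.vecMulVec (wSeq n i) (wSeq n j))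

/-- The `k`-th standard basis vector of the first copy of `ℝⁿ`; it is zero if `n ≤ k`. -/
def xVec (n k : ℕ) : Fin n ⊕ Fin n → ℝ :=
  Sum.elim (fun a => if (a : ℕ) = k then 1 else 0) 0

/-- The `k`-th standard basis vector of the second copy of `ℝⁿ`; it is zero if `n ≤ k`. -/
def yVec (n k : ℕ) : Fin n ⊕ Fin n → ℝ :=
  Sum.elim 0 (fun a => if (a : ℕ) = k then 1 else 0)

lemma wSeq_zero (n k : ℕ) : wSeq n (4 * k) = xVec n k := by
  have h : 4 * k / 4 = k := by omega
  have h' : 4 * k % 4 = 0 := by omega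
  ext (a | a) <;> simp [wSeq, uSeq, vSeq, ubar, vbar, xVec, h, h']

lemma wSeq_one (n k : ℕ) : wSeq n (4 * k + 1) = yVec n k := by
  have h : (4 * k + 1) / 4 = k := by omega
  have h' : (4 * k + 1) % 4 = 1 := by omega
  ext (a | a) <;> simp [wSeq, uSeq, vSeq, ubar, vbar, yVec, h, h']

lemma wSeq_two (n k : ℕ) : wSeq n (4 * k + 2) = -xVec n k := by
  have h : (4 * k + 2) / 4 = k := by omega
  have h' : (4 * k + 2) % 4 = 2 := by omega
  ext (a | a) <;> simp [wSeq, uSeq, vSeq, ubar, vbar, xVec, h, h', apply_ite]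

lemma wSeq_three (n k : ℕ) : wSeq n (4 * k + 3) = -yVec n k := by
  have h : (4 * k + 3) / 4 = k := by omega
  have h' : (4 * k + 3) % 4 = 3 := by omega
  ext (a | a) <;> simp [wSeq, uSeq, vSeq, ubar, vbar, yVec, h, h', apply_ite]

lemma sum_wSeq (n N : ℕ) (b : Fin n ⊕ Fin n) :
    ∑ j ∈ Finset.range (4 * N), wSeq n j b = 0 := by
  induction N with
  | zero => simp
  | succ k ih =>
    rw [show 4 * (k + 1) = 4 * k + 1 + 1 + 1 + 1 by ring]
    simp only [Finset.sum_range_succ, ih, add_assoc, Nat.reduceAdd,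
      wSeq_zero, wSeq_one, wSeq_two, wSeq_three, Pi.neg_apply]
    ring

/-- The entries of the first `N` periods of the double sum defining `T(W)`. -/
lemma sum_periods (n N : ℕ) (α c : ℝ) (a b : Fin n ⊕ Fin n) :
    ∑ i ∈ Finset.range (4 * N), (α * (wSeq n i a * wSeq n i b)
        + c * (wSeq n i a * ∑ j ∈ Finset.range i, wSeq n j b)) =
      ∑ k ∈ Finset.range N,
        (2 * α * (xVec n k a * xVec n k b + yVec n k a * yVec n k b)
          + c * (yVec n k a * xVec n k b - xVec n k a * xVec n k b
            - xVec n k a * yVec n k b - yVec n k a * yVec n k b)) := by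
  induction N with
  | zero => simp
  | succ k ih =>
    rw [Finset.sum_range_succ _ k, ← ih,
      show 4 * (k + 1) = 4 * k + 1 + 1 + 1 + 1 by ring]
    simp only [Finset.sum_range_succ _ (4 * k), Finset.sum_range_succ _ (4 * k + 1),
      Finset.sum_range_succ _ (4 * k + 1 + 1), Finset.sum_range_succ _ (4 * k + 1 + 1 + 1),
      sum_wSeq, add_assoc, Nat.reduceAdd,
      wSeq_zero, wSeq_one, wSeq_two, wSeq_three, Pi.neg_apply]
    ring

lemma Tmat_eq (n : ℕ) (α₁ α₂ : ℝ) :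
    Tmat n α₁ α₂ =
      Matrix.fromBlocks
        ((2 * α₂ - (α₁ + α₂) ^ 2) • (1 : Matrix (Fin n) (Fin n) ℝ))
        (-(α₁ + α₂) ^ 2 • (1 : Matrix (Fin n) (Fin n) ℝ))
        ((α₁ + α₂) ^ 2 • (1 : Matrix (Fin n) (Fin n) ℝ))
        ((2 * α₂ - (α₁ + α₂) ^ 2) • (1 : Matrix (Fin n) (Fin n) ℝ)) := by
  have hsum (a b : Fin n) : ∑ k ∈ Finset.range n,
      (if (a : ℕ) = k then (1 : ℝ) else 0) * (if (b : ℕ) = k then 1 else 0)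
        = (1 : Matrix (Fin n) (Fin n) ℝ) a b := by
    simp [Matrix.one_apply, Fin.ext_iff, eq_comm]
  ext a b
  have h := sum_periods n n α₂ ((α₁ + α₂) ^ 2) a b
  have hT : Tmat n α₁ α₂ a b = ∑ i ∈ Finset.range (4 * n), (α₂ * (wSeq n i a * wSeq n i b)
      + (α₁ + α₂) ^ 2 * (wSeq n i a * ∑ j ∈ Finset.range i, wSeq n j b)) := by
    simp [Tmat, Matrix.sum_apply, Matrix.vecMulVec_apply, Finset.mul_sum]
  rw [hT, h]
  rcases a with a | a <;> rcases b with b | b <;>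
    simp only [xVec, yVec, Sum.elim_inl, Sum.elim_inr, Pi.zero_apply, mul_zero, zero_mul,
      add_zero, zero_add, sub_zero, zero_sub, Finset.sum_add_distrib, ← Finset.mul_sum,
      Finset.sum_neg_distrib, hsum, Matrix.fromBlocks_apply₁₁, Matrix.fromBlocks_apply₁₂,
      Matrix.fromBlocks_apply₂₁, Matrix.fromBlocks_apply₂₂, Matrix.smul_apply, smul_eq_mul] <;>
    ring

/-- Remark 1, eq. (15): for the coordinate-wise exploration sequence,
`T(W) = [[−I, −I],[I, −I]]` when `(α₁, α₂) = (1, 0)`, and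
`T(W) = [[0, −I],[I, 0]]` when `(α₁, α₂) = (1/2, 1/2)`. -/
theorem stmt17 (n : ℕ) :
    Tmat n 1 0 =
      Matrix.fromBlocks (-(1 : Matrix (Fin n) (Fin n) ℝ)) (-(1 : Matrix (Fin n) (Fin n) ℝ))
        (1 : Matrix (Fin n) (Fin n) ℝ) (-(1 : Matrix (Fin n) (Fin n) ℝ)) ∧
    Tmat n (1 / 2) (1 / 2) =
      Matrix.fromBlocks (0 : Matrix (Fin n) (Fin n) ℝ) (-(1 : Matrix (Fin n) (Fin n) ℝ))
        (1 : Matrix (Fin n) (Fin n) ℝ) (0 : Matrix (Fin n) (Fin n) ℝ) := by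
  constructor
  · rw [Tmat_eq]; norm_num
  · rw [Tmat_eq]; norm_num
end
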